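/- Let S = [[1,0],[0,0]] and T(d) = [[d, √(d(1−d))],[√(d(1−d)), 1−d]] for 0 ≤ d ≤ 1. Then ‖S − T((1+√d)/2)‖ = ‖T(d) − T((1+√d)/2)‖ = √(2 − 2√d)/2 ≤ 1/√2. -/

import Mathlib

/-- The operator norm (ℓ²→ℓ² norm) of a square matrix. -/
noncomputable def matOpNorm {n : Type*} [Fintype n] [DecidableEq n] {𝕜 : Type*} [RCLike 𝕜]
    (M : Matrix n n 𝕜) : ℝ :=
  ‖Matrix.toEuclideanCLM (𝕜 := 𝕜) M‖

/-- The rank-one projection matrix `S = [[1,0],[0,0]]`. -/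
noncomputable def Smat : Matrix (Fin 2) (Fin 2) ℝ := !![1, 0; 0, 0]

/-- The rank-one projection matrix `T(d) = [[d, √(d(1−d))],[√(d(1−d)), 1−d]]`. -/
noncomputable def Tmat (d : ℝ) : Matrix (Fin 2) (Fin 2) ℝ :=
  !![d, Real.sqrt (d * (1 - d)); Real.sqrt (d * (1 - d)), 1 - d]

lemma opNorm_aux (a b c : ℝ) (hc : 0 ≤ c) (h : a ^ 2 + b ^ 2 = c ^ 2) :
    matOpNorm (!![a, b; b, -a] : Matrix (Fin 2) (Fin 2) ℝ) = c := by
  have key : ∀ x : EuclideanSpace ℝ (Fin 2),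
      ‖Matrix.toEuclideanCLM (𝕜 := ℝ) (!![a, b; b, -a] : Matrix (Fin 2) (Fin 2) ℝ) x‖
        = c * ‖x‖ := by
    intro x
    rw [← sq_eq_sq₀ (norm_nonneg _) (by positivity), mul_pow, EuclideanSpace.norm_sq_eq,
      EuclideanSpace.norm_sq_eq]
    simp only [Fin.sum_univ_two, Matrix.ofLp_toEuclideanCLM, Real.norm_eq_abs, sq_abs]
    simp [Matrix.mulVec, dotProduct, Fin.sum_univ_two]
    rw [← h]
    ring
  unfold matOpNorm
  apply le_antisymm
  · exact ContinuousLinearMap.opNorm_le_bound _ hc (fun x => (key x).le)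
  · have h1 := ContinuousLinearMap.le_opNorm
      (Matrix.toEuclideanCLM (𝕜 := ℝ) (!![a, b; b, -a] : Matrix (Fin 2) (Fin 2) ℝ))
      (EuclideanSpace.single 0 1)
    rw [key] at h1
    simpa using h1

theorem stmt9 (d : ℝ) (h₀ : 0 ≤ d) (h₁ : d ≤ 1) :
    matOpNorm (Smat - Tmat ((1 + Real.sqrt d) / 2)) = Real.sqrt (2 - 2 * Real.sqrt d) / 2 ∧
      matOpNorm (Tmat d - Tmat ((1 + Real.sqrt d) / 2)) = Real.sqrt (2 - 2 * Real.sqrt d) / 2 ∧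
      Real.sqrt (2 - 2 * Real.sqrt d) / 2 ≤ (Real.sqrt 2)⁻¹ := by
  obtain ⟨s, hs⟩ : ∃ s, s = Real.sqrt d := ⟨_, rfl⟩
  have s0 : 0 ≤ s := hs ▸ Real.sqrt_nonneg d
  have s1 : s ≤ 1 := by rw [hs]; exact Real.sqrt_le_one.mpr h₁
  have hd : d = s ^ 2 := by rw [hs, Real.sq_sqrt h₀]
  rw [← hs]
  obtain ⟨r, hr⟩ : ∃ r, r = Real.sqrt (1 - s ^ 2) := ⟨_, rfl⟩
  have r0 : 0 ≤ r := hr ▸ Real.sqrt_nonneg _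
  have hr2 : r ^ 2 = 1 - s ^ 2 := by rw [hr, Real.sq_sqrt (by nlinarith)]
  have e1 : Real.sqrt ((1 + s) / 2 * (1 - (1 + s) / 2)) = r / 2 := by
    rw [show (1 + s) / 2 * (1 - (1 + s) / 2) = (r / 2) ^ 2 by linear_combination -hr2 / 4]
    exact Real.sqrt_sq (by positivity)
  have e2 : Real.sqrt (d * (1 - d)) = s * r := by
    rw [show d * (1 - d) = (s * r) ^ 2 by rw [mul_pow, hr2, hd]]
    exact Real.sqrt_sq (by positivity)
  have hc : (Real.sqrt (2 - 2 * s) / 2) ^ 2 = (1 - s) / 2 := by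
    rw [div_pow, Real.sq_sqrt (by linarith)]; ring
  have c0 : 0 ≤ Real.sqrt (2 - 2 * s) / 2 := by positivity
  refine ⟨?_, ?_, ?_⟩
  · rw [← opNorm_aux ((1 - s) / 2) (-(r / 2)) _ c0 (by rw [hc]; linear_combination hr2 / 4)]
    congr 1
    unfold Smat Tmat
    rw [e1]
    ext i j
    fin_cases i <;> fin_cases j <;> simp <;> ring
  · rw [← opNorm_aux (s ^ 2 - (1 + s) / 2) (s * r - r / 2) _ c0
      (by rw [hc]; linear_combination (s - 1 / 2) ^ 2 * hr2)]
    congr 1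
    unfold Tmat
    rw [e1, e2, hd]
    ext i j
    fin_cases i <;> fin_cases j <;> simp
  · rw [← sq_le_sq₀ c0 (by positivity), hc, inv_pow, Real.sq_sqrt (by norm_num)]
    linarith
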